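/- arXiv:2602.04623 — 3 statements merged into one kernel-verified Lean document; each statement's English description precedes it below -/
import Mathlib

section
/- Let M and N be positive integers and let H be an M-by-N complex matrix. The function that maps (z, β) ∈ ℝ^N × ℝ to log det(e^β I_M + H diag(e^{z_1}, …, e^{z_N}) H^*) is convex on ℝ^{N+1}. (Here the matrix e^β I_M + H diag(e^{z}) H^* is Hermitian positive definite, so its determinant is a positive real number and the logarithm is well defined.) -/
open Matrix

/-!
Since `e^β I + H diag(e^z) Hᴴ = G diag(e^β, …, e^β, e^{z_1}, …, e^{z_N}) Gᴴ` with `G = [I H]`, the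
Cauchy-Binet formula expands the determinant into a sum of exponentials of linear forms in `(z, β)`,
with coefficients the squared absolute values of the maximal minors of `G`. The logarithm of such a
sum is convex by Hölder's inequality.
-/

open scoped Nat

section LogSumExp

variable {ι : Type*} [Fintype ι]

lemma sum_rpow_mul_rpow_le {a b : ℝ} (ha : 0 < a) (hb : 0 < b) (hab : a + b = 1)
    {u v : ι → ℝ} (hu : 0 ≤ u) (hv : 0 ≤ v) :
    ∑ i, u i ^ a * v i ^ b ≤ (∑ i, u i) ^ a * (∑ i, v i) ^ b := by
  have holder := Real.inner_le_Lp_mul_Lq_of_nonneg Finset.univ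
    (Real.HolderConjugate.inv_inv ha hb hab)
    (fun i _ => Real.rpow_nonneg (hu i) a) (fun i _ => Real.rpow_nonneg (hv i) b)
  simpa only [Real.rpow_rpow_inv (hu _) ha.ne', Real.rpow_rpow_inv (hv _) hb.ne', one_div,
    inv_inv] using holder

lemma sum_mul_exp_pos {c : ι → ℝ} (hc : 0 < c) (u : ι → ℝ) : 0 < ∑ i, c i * Real.exp (u i) := by
  obtain ⟨hc_nonneg, i, hi⟩ := Pi.lt_def.mp hc
  exact Finset.sum_pos' (fun j _ => mul_nonneg (hc_nonneg j) (Real.exp_nonneg _))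
    ⟨i, Finset.mem_univ i, mul_pos hi (Real.exp_pos _)⟩

lemma sum_mul_exp_combo_le {a b : ℝ} (ha : 0 < a) (hb : 0 < b) (hab : a + b = 1)
    {c : ι → ℝ} (hc : 0 ≤ c) (u v : ι → ℝ) :
    ∑ i, c i * Real.exp (a * u i + b * v i) ≤
      (∑ i, c i * Real.exp (u i)) ^ a * (∑ i, c i * Real.exp (v i)) ^ b := by
  have split (i : ι) : c i * Real.exp (a * u i + b * v i) =
      (c i * Real.exp (u i)) ^ a * (c i * Real.exp (v i)) ^ b := by
    rw [Real.mul_rpow (hc i) (Real.exp_nonneg _), Real.mul_rpow (hc i) (Real.exp_nonneg _),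
      mul_mul_mul_comm, ← Real.rpow_add_of_nonneg (hc i) ha.le hb.le, hab, Real.rpow_one,
      ← Real.exp_mul, ← Real.exp_mul, ← Real.exp_add, mul_comm a, mul_comm b]
  simp only [split]
  exact sum_rpow_mul_rpow_le ha hb hab (fun i => mul_nonneg (hc i) (Real.exp_nonneg _))
    fun i => mul_nonneg (hc i) (Real.exp_nonneg _)

lemma convexOn_log_sum_mul_exp {E : Type*} [AddCommMonoid E] [Module ℝ E] {s : Set E}
    {c : ι → ℝ} (hc : 0 < c) {f : ι → E → ℝ} (hf : ∀ i, ConvexOn ℝ s (f i)) :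
    ConvexOn ℝ s fun x => Real.log (∑ i, c i * Real.exp (f i x)) := by
  obtain ⟨hc_nonneg, i₀, -⟩ := Pi.lt_def.mp hc
  refine convexOn_iff_forall_pos.mpr ⟨(hf i₀).1, fun x hx y hy a b ha hb hab => ?_⟩
  have hX := sum_mul_exp_pos hc (f · x)
  have hY := sum_mul_exp_pos hc (f · y)
  calc Real.log (∑ i, c i * Real.exp (f i (a • x + b • y)))
      ≤ Real.log (∑ i, c i * Real.exp (a * f i x + b * f i y)) := by
        refine Real.log_le_log (sum_mul_exp_pos hc _) (Finset.sum_le_sum fun i _ => ?_)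
        exact mul_le_mul_of_nonneg_left
          (Real.exp_le_exp.mpr ((hf i).2 hx hy ha.le hb.le hab)) (hc_nonneg i)
    _ ≤ Real.log ((∑ i, c i * Real.exp (f i x)) ^ a * (∑ i, c i * Real.exp (f i y)) ^ b) :=
        Real.log_le_log (sum_mul_exp_pos hc _) (sum_mul_exp_combo_le ha hb hab hc_nonneg _ _)
    _ = a • Real.log (∑ i, c i * Real.exp (f i x)) +
          b • Real.log (∑ i, c i * Real.exp (f i y)) := by
        rw [Real.log_mul (Real.rpow_pos_of_pos hX a).ne' (Real.rpow_pos_of_pos hY b).ne',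
          Real.log_rpow hX, Real.log_rpow hY, smul_eq_mul, smul_eq_mul]

end LogSumExp

lemma convexOn_sum {𝕜 E β ι : Type*} [Semiring 𝕜] [PartialOrder 𝕜] [AddCommMonoid E]
    [AddCommMonoid β] [PartialOrder β] [IsOrderedAddMonoid β] [SMul 𝕜 E] [DistribSMul 𝕜 β]
    {s : Set E} (hs : Convex 𝕜 s) {t : Finset ι} {f : ι → E → β}
    (hf : ∀ i ∈ t, ConvexOn 𝕜 s (f i)) : ConvexOn 𝕜 s fun x => ∑ i ∈ t, f i x := by
  refine ⟨hs, fun x hx y hy a b ha hb hab => ?_⟩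
  rw [Finset.smul_sum, Finset.smul_sum, ← Finset.sum_add_distrib]
  exact Finset.sum_le_sum fun i hi => (hf i hi).2 hx hy ha hb hab

section CauchyBinet

variable {R m n : Type*} [CommRing R] [Fintype m] [DecidableEq m] [Fintype n]

lemma det_mul_eq_sum_prod_mul_det_submatrix (A : Matrix m n R) (B : Matrix n m R) :
    (A * B).det = ∑ f : m → n, (∏ i, A i (f i)) * (B.submatrix f id).det := by
  classical
  have rows : A * B = fun i => ∑ j, A i j • B j := by
    ext i l
    simp [Matrix.mul_apply, Finset.sum_apply]
  rw [rows]
  exact (detRowAlternating.toMultilinearMap.map_sum fun i j => A i j • B j).trans <|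
    Finset.sum_congr rfl fun f _ =>
      detRowAlternating.toMultilinearMap.map_smul_univ (fun i => A i (f i)) fun i => B (f i)

lemma exists_det_submatrix_ne_zero_of_det_mul_ne_zero {A : Matrix m n R} {B : Matrix n m R}
    (hAB : (A * B).det ≠ 0) : ∃ f : m → n, (B.submatrix f id).det ≠ 0 := by
  rw [det_mul_eq_sum_prod_mul_det_submatrix] at hAB
  obtain ⟨f, -, hf⟩ := Finset.exists_ne_zero_of_sum_ne_zero hAB
  exact ⟨f, right_ne_zero_of_mul hf⟩

/- Summing over all maps `m → n`, rather than over the `card m`-element subsets of `n`, counts each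
term of the usual Cauchy-Binet formula `(card m)!` times, and needs no order on the indices. -/
lemma factorial_mul_det_mul_eq_sum (A : Matrix m n R) (B : Matrix n m R) :
    ((Fintype.card m)! : R) * (A * B).det =
      ∑ f : m → n, (A.submatrix id f).det * (B.submatrix f id).det := by
  have sign_mul_sign (σ : Equiv.Perm m) :
      ((Equiv.Perm.sign σ : ℤ) : R) * ((Equiv.Perm.sign σ : ℤ) : R) = 1 := by
    rw [← Int.cast_mul, Int.units_coe_mul_self, Int.cast_one]
  symm
  calc ∑ f : m → n, (A.submatrix id f).det * (B.submatrix f id).det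
      = ∑ σ : Equiv.Perm m, ((Equiv.Perm.sign σ : ℤ) : R) *
          ∑ f : m → n, (∏ i, A (σ i) (f i)) * (B.submatrix f id).det := by
        simp only [det_apply' (A.submatrix id _), submatrix_apply, id_eq, Finset.sum_mul,
          Finset.mul_sum, mul_assoc]
        exact Finset.sum_comm
    _ = ∑ σ : Equiv.Perm m, ((Equiv.Perm.sign σ : ℤ) : R) * ((A * B).submatrix σ id).det := by
        refine Finset.sum_congr rfl fun σ _ => congrArg (_ * ·) ?_
        exact (det_mul_eq_sum_prod_mul_det_submatrix (A.submatrix σ id) B).symm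
    _ = ((Fintype.card m)! : R) * (A * B).det := by
        simp only [det_permute, ← mul_assoc, sign_mul_sign, one_mul, Finset.sum_const,
          Finset.card_univ, Fintype.card_perm, nsmul_eq_mul]

end CauchyBinet

lemma fromCols_one_mul_diagonal_mul_conjTranspose {R m n : Type*} [Semiring R] [StarRing R]
    [Fintype m] [DecidableEq m] [Fintype n] [DecidableEq n]
    (H : Matrix m n R) (d : m → R) (w : n → R) :
    fromCols (1 : Matrix m m R) H * diagonal (Sum.elim d w) * (fromCols (1 : Matrix m m R) H)ᴴ =
      diagonal d + H * diagonal w * Hᴴ := by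
  rw [conjTranspose_fromCols_eq_fromRows_conjTranspose, ← fromBlocks_diagonal,
    fromCols_mul_fromBlocks, fromCols_mul_fromRows]
  simp

section LogDet

variable {𝕜 m n : Type*} [RCLike 𝕜] [Fintype m] [DecidableEq m] [Fintype n]

open scoped ComplexOrder in
lemma det_fromCols_one_mul_conjTranspose_ne_zero (H : Matrix m n 𝕜) :
    (fromCols (1 : Matrix m m 𝕜) H * (fromCols (1 : Matrix m m 𝕜) H)ᴴ).det ≠ 0 := by
  rw [conjTranspose_fromCols_eq_fromRows_conjTranspose, fromCols_mul_fromRows, conjTranspose_one,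
    one_mul]
  exact (PosDef.one.add_posSemidef (posSemidef_self_mul_conjTranspose H)).det_pos.ne'

variable [DecidableEq n]

lemma det_mul_diagonal_mul_conjTranspose (G : Matrix m n 𝕜) (w : n → ℝ) :
    (G * diagonal (fun j => (w j : 𝕜)) * Gᴴ).det =
      ((∑ f : m → n, ‖(G.submatrix id f).det‖ ^ 2 / (Fintype.card m)! * ∏ i, w (f i) : ℝ) : 𝕜) := by
  have minor (f : m → n) :
      ((G * diagonal (fun j => (w j : 𝕜))).submatrix id f).det * (Gᴴ.submatrix f id).det =
        (‖(G.submatrix id f).det‖ : 𝕜) ^ 2 * ∏ i, (w (f i) : 𝕜) := by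
    have scaled : (G * diagonal (fun j => (w j : 𝕜))).submatrix id f =
        G.submatrix id f * diagonal fun i => (w (f i) : 𝕜) := by
      ext i j
      simp only [submatrix_apply, id_eq, mul_diagonal]
    rw [scaled, ← conjTranspose_submatrix, det_mul, det_diagonal, det_conjTranspose,
      mul_right_comm, RCLike.star_def, RCLike.mul_conj]
  have factorial_ne_zero : ((Fintype.card m)! : 𝕜) ≠ 0 :=
    Nat.cast_ne_zero.mpr (Nat.factorial_ne_zero _)
  apply mul_left_cancel₀ factorial_ne_zero
  rw [factorial_mul_det_mul_eq_sum]
  push_cast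
  rw [Finset.mul_sum]
  refine Finset.sum_congr rfl fun f _ => (minor f).trans ?_
  field_simp

lemma convexOn_log_re_det_mul_diagonal_exp_mul_conjTranspose
    {E : Type*} [AddCommMonoid E] [Module ℝ E] {s : Set E} (hs : Convex ℝ s)
    {G : Matrix m n 𝕜} (hG : (G * Gᴴ).det ≠ 0) {f : n → E → ℝ}
    (hf : ∀ j, ConvexOn ℝ s (f j)) :
    ConvexOn ℝ s fun x =>
      Real.log (RCLike.re (G * diagonal (fun j => (Real.exp (f j x) : 𝕜)) * Gᴴ).det) := by
  let c (g : m → n) : ℝ := ‖(G.submatrix id g).det‖ ^ 2 / (Fintype.card m)!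
  have c_pos : 0 < c := by
    obtain ⟨g, hg⟩ := exists_det_submatrix_ne_zero_of_det_mul_ne_zero hG
    rw [← conjTranspose_submatrix, det_conjTranspose, star_ne_zero] at hg
    exact Pi.lt_def.mpr ⟨fun _ => by positivity, g, by positivity⟩
  simp only [det_mul_diagonal_mul_conjTranspose, RCLike.ofReal_re, ← Real.exp_sum]
  exact convexOn_log_sum_mul_exp c_pos fun g => convexOn_sum hs fun i _ => hf (g i)

theorem dolTV_logdet_convex_general (H : Matrix m n 𝕜) :
    ConvexOn ℝ Set.univ fun p : (n → ℝ) × ℝ =>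
      Real.log (RCLike.re ((Real.exp p.2 : 𝕜) • (1 : Matrix m m 𝕜) +
        H * diagonal (fun j => (Real.exp (p.1 j) : 𝕜)) * Hᴴ).det) := by
  let f : m ⊕ n → (n → ℝ) × ℝ → ℝ := Sum.elim (fun _ p => p.2) fun j p => p.1 j
  have convexOn_f : ∀ k, ConvexOn ℝ Set.univ (f k)
    | .inl _ => (LinearMap.snd ℝ (n → ℝ) ℝ).convexOn convex_univ
    | .inr j => (LinearMap.proj j ∘ₗ LinearMap.fst ℝ (n → ℝ) ℝ).convexOn convex_univ
  have exp_f (p : (n → ℝ) × ℝ) : (fun k => (Real.exp (f k p) : 𝕜)) =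
      Sum.elim (fun _ => (Real.exp p.2 : 𝕜)) fun j => (Real.exp (p.1 j) : 𝕜) := by
    ext (_ | _) <;> rfl
  simpa only [exp_f, fromCols_one_mul_diagonal_mul_conjTranspose, ← smul_one_eq_diagonal] using
    convexOn_log_re_det_mul_diagonal_exp_mul_conjTranspose convex_univ
      (det_fromCols_one_mul_conjTranspose_ne_zero H) convexOn_f

end LogDet

/-- **Proposition 1.** For an `M × N` complex matrix `H`, the function
`(z, β) ↦ log det(e^β I + H diag(e^z) Hᴴ)` is convex on `ℝ^N × ℝ`.
The determinant of the Hermitian positive definite matrix is a positive real,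
recovered via its real part. -/
theorem dolTV_logdet_convex (M N : ℕ) (hM : 0 < M) (hN : 0 < N)
    (H : Matrix (Fin M) (Fin N) ℂ) :
    ConvexOn ℝ Set.univ (fun p : (Fin N → ℝ) × ℝ =>
      Real.log (((Real.exp p.2 : ℂ) • (1 : Matrix (Fin M) (Fin M) ℂ) +
        H * Matrix.diagonal (fun n => (Real.exp (p.1 n) : ℂ)) * Hᴴ).det.re)) :=
  dolTV_logdet_convex_general H
end

section
/- Let K and I be positive integers and let p_1, …, p_I, q_1, …, q_I ∈ ℝ^K be real vectors such that the family {p_i, q_i}_{i=1}^I spans ℝ^K. Then the function z ∈ ℝ^I ↦ log det(∑_{i=1}^I e^{z_i} (p_i p_i^T + q_i q_i^T)) is convex on ℝ^I. (The matrix ∑_{i=1}^I e^{z_i}(p_i p_i^T + q_i q_i^T) is real symmetric positive definite since the family spans ℝ^K and all weights e^{z_i} are positive.) -/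
open Matrix

/-!
After normalising by a congruence, let the positive semidefinite matrices `B i` sum to the
identity. In an orthonormal eigenbasis `u k` of `∑ i, w i • B i`, the `k`-th eigenvalue is the
weighted average of the `w i` with weights `⟪u k, B i (u k)⟫`. Concavity of `log` and summation over
`k` give `∑ i, tr (B i) * log (w i) ≤ log det (∑ i, w i • B i)`. Undoing the normalisation, this
is a supporting hyperplane at `t = 0` of `t ↦ log det (∑ i, exp (t i) • A i)`. Rescaling the `A i`
moves the base point anywhere, so this function is convex, and as the slopes
`tr ((∑ i, A i)⁻¹ * A i)` are nonnegative it stays convex when convex functions are substituted for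
the `t i`.
-/

section LogDet

open scoped ComplexOrder

variable {ι n 𝕜 : Type*} [Fintype ι] [RCLike 𝕜]

theorem sum_re_diag_mul_log_le_log_re_diag [DecidableEq n] {B : ι → Matrix n n 𝕜}
    (hB : ∀ i, (B i).PosSemidef) (hsum : ∑ i, B i = 1) {w : ι → ℝ} (hw : ∀ i, 0 < w i) (k : n) :
    ∑ i, RCLike.re (B i k k) * Real.log (w i) ≤ Real.log (RCLike.re ((∑ i, w i • B i) k k)) := by
  have hweight_nonneg (i : ι) : 0 ≤ RCLike.re (B i k k) :=
    (RCLike.nonneg_iff.mp (hB i).diag_nonneg).1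
  have hweight_sum : ∑ i, RCLike.re (B i k k) = 1 := by
    rw [← map_sum, ← Matrix.sum_apply, hsum, one_apply_eq, RCLike.one_re]
  have haverage : RCLike.re ((∑ i, w i • B i) k k) = ∑ i, RCLike.re (B i k k) • w i := by
    simp only [Matrix.sum_apply, Matrix.smul_apply, map_sum, RCLike.smul_re, smul_eq_mul, mul_comm]
  rw [haverage]
  exact strictConcaveOn_log_Ioi.concaveOn.le_map_sum (fun i _ ↦ hweight_nonneg i) hweight_sum
    fun i _ ↦ hw i

theorem posDef_sum_smul_of_posDef_sum [Finite n] {A : ι → Matrix n n 𝕜}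
    (hA : ∀ i, (A i).PosSemidef) (hsum : (∑ i, A i).PosDef) {w : ι → ℝ} (hw : ∀ i, 0 < w i) :
    (∑ i, w i • A i).PosDef := by
  have := Fintype.ofFinite n
  refine .of_dotProduct_mulVec_pos
    (posSemidef_sum _ fun i _ ↦ (hA i).smul (hw i).le).isHermitian fun x hx ↦ ?_
  have hnonneg (i : ι) : 0 ≤ star x ⬝ᵥ A i *ᵥ x := (hA i).dotProduct_mulVec_nonneg x
  have hpos : 0 < ∑ i, star x ⬝ᵥ A i *ᵥ x := by
    simpa only [sum_mulVec, dotProduct_sum] using hsum.dotProduct_mulVec_pos hx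
  obtain ⟨i, hi, hi_ne⟩ := Finset.exists_ne_zero_of_sum_ne_zero hpos.ne'
  simp only [sum_mulVec, dotProduct_sum, smul_mulVec, dotProduct_smul]
  exact Finset.sum_pos' (fun j _ ↦ smul_nonneg (hw j).le (hnonneg j))
    ⟨i, hi, smul_pos (hw i) ((hnonneg i).lt_of_ne' hi_ne)⟩

theorem posDef_sum_vecMulVec_star_of_span_eq_top {R : Type*} [CommRing R] [NoZeroDivisors R]
    [PartialOrder R] [StarRing R] [StarOrderedRing R] [Finite n] {v : ι → n → R}
    (hv : Submodule.span R (Set.range v) = ⊤) : (∑ i, vecMulVec (v i) (star (v i))).PosDef := by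
  have := Fintype.ofFinite n
  have hinj : Function.Injective (of v)ᵀ.vecMul := by
    intro x y hxy
    have hdot : dotProductBilin R R x = dotProductBilin R R y :=
      LinearMap.ext_on_range hv fun i ↦ congrFun hxy i
    exact dotProduct_eq _ _ fun z ↦ LinearMap.congr_fun hdot z
  have hfactor : ∑ i, vecMulVec (v i) (star (v i)) = (of v)ᵀ * (of v)ᵀᴴ := by
    ext a b
    simp [Matrix.sum_apply, mul_apply, vecMulVec_apply]
  rw [hfactor]
  exact .mul_conjTranspose_self _ hinj

variable [Fintype n]

open scoped MatrixOrder in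
theorem trace_mul_nonneg_of_posSemidef {A B : Matrix n n 𝕜} (hA : A.PosSemidef)
    (hB : B.PosSemidef) : 0 ≤ (A * B).trace := by
  classical
  obtain ⟨C, rfl⟩ := CStarAlgebra.nonneg_iff_eq_star_mul_self.mp hA.nonneg
  rw [star_eq_conjTranspose, ← trace_mul_cycle]
  exact (hB.mul_mul_conjTranspose_same C).trace_nonneg

variable [DecidableEq n]

-- The determinant of a positive definite matrix is positive, so here and below the norm only serves
-- to read it as a real number.
theorem log_norm_det_eq_sum_log_eigenvalues {A : Matrix n n 𝕜} (hA : A.PosDef) :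
    Real.log ‖A.det‖ = ∑ k, Real.log (hA.isHermitian.eigenvalues k) := by
  rw [hA.isHermitian.det_eq_prod_eigenvalues, norm_prod,
    Real.log_prod fun k _ ↦ by simpa using (hA.eigenvalues_pos k).ne']
  simp

theorem sum_re_trace_mul_log_le_log_norm_det {B : ι → Matrix n n 𝕜}
    (hB : ∀ i, (B i).PosSemidef) (hsum : ∑ i, B i = 1) {w : ι → ℝ} (hw : ∀ i, 0 < w i) :
    ∑ i, RCLike.re (B i).trace * Real.log (w i) ≤ Real.log ‖(∑ i, w i • B i).det‖ := by
  have hpos : (∑ i, w i • B i).PosDef := posDef_sum_smul_of_posDef_sum hB (hsum ▸ .one) hw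
  let U : Matrix n n 𝕜 := hpos.isHermitian.eigenvectorUnitary
  have hU_star_mul : Uᴴ * U = 1 := Unitary.coe_star_mul_self _
  have hU_mul_star : U * Uᴴ = 1 := Unitary.coe_mul_star_self _
  let D (i : ι) : Matrix n n 𝕜 := Uᴴ * B i * U
  have hD_sum : ∑ i, D i = 1 := by
    rw [← Finset.sum_mul, ← Finset.mul_sum, hsum, mul_one, hU_star_mul]
  have hD_trace (i : ι) : RCLike.re (B i).trace = ∑ k, RCLike.re (D i k k) := by
    have hconj : (D i).trace = (B i).trace := by
      rw [trace_mul_cycle, hU_mul_star, one_mul]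
    rw [← hconj]
    exact map_sum _ _ _
  have hD_diagonal : ∑ i, w i • D i = diagonal (RCLike.ofReal ∘ hpos.isHermitian.eigenvalues) := by
    rw [← hpos.isHermitian.conjStarAlgAut_star_eigenvectorUnitary,
      Unitary.conjStarAlgAut_star_apply]
    simp only [D, Finset.mul_sum, Finset.sum_mul, Matrix.mul_smul, Matrix.smul_mul,
      U, star_eq_conjTranspose]
  calc ∑ i, RCLike.re (B i).trace * Real.log (w i)
      = ∑ k, ∑ i, RCLike.re (D i k k) * Real.log (w i) := by
        rw [Finset.sum_comm]
        simp only [hD_trace, Finset.sum_mul]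
    _ ≤ ∑ k, Real.log (RCLike.re ((∑ i, w i • D i) k k)) := by
        gcongr with k
        exact sum_re_diag_mul_log_le_log_re_diag
          (fun i ↦ (hB i).conjTranspose_mul_mul_same U) hD_sum hw k
    _ = ∑ k, Real.log (hpos.isHermitian.eigenvalues k) := by
        simp only [hD_diagonal, diagonal_apply_eq, Function.comp_apply, RCLike.ofReal_re]
    _ = Real.log ‖(∑ i, w i • B i).det‖ := (log_norm_det_eq_sum_log_eigenvalues hpos).symm

open scoped MatrixOrder in
theorem log_norm_det_add_sum_re_trace_mul_log_le {A : ι → Matrix n n 𝕜}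
    (hA : ∀ i, (A i).PosSemidef) (hsum : (∑ i, A i).PosDef) {w : ι → ℝ} (hw : ∀ i, 0 < w i) :
    Real.log ‖(∑ i, A i).det‖ + ∑ i, RCLike.re ((∑ j, A j)⁻¹ * A i).trace * Real.log (w i) ≤
      Real.log ‖(∑ i, w i • A i).det‖ := by
  obtain ⟨C, hC⟩ : ∃ C : Matrix n n 𝕜, (∑ i, A i)⁻¹ = Cᴴ * C :=
    CStarAlgebra.nonneg_iff_eq_star_mul_self.mp hsum.inv.posSemidef.nonneg
  let B (i : ι) : Matrix n n 𝕜 := C * A i * Cᴴ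
  have hB_sum : ∑ i, B i = 1 := by
    rw [← Finset.sum_mul, ← Finset.mul_sum, mul_eq_one_comm, ← mul_assoc, ← hC,
      nonsing_inv_mul _ ((isUnit_iff_isUnit_det _).mp hsum.isUnit)]
  have hB_trace (i : ι) : (B i).trace = ((∑ j, A j)⁻¹ * A i).trace := by
    rw [trace_mul_cycle, hC]
  have hB_det : (∑ i, w i • B i).det = (∑ i, w i • A i).det / (∑ i, A i).det := by
    have hcongr : ∑ i, w i • B i = C * (∑ i, w i • A i) * Cᴴ := by
      simp only [B, Finset.mul_sum, Finset.sum_mul, Matrix.mul_smul, Matrix.smul_mul]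
    rw [hcongr, det_mul_right_comm, det_mul, det_mul_comm C, ← hC, det_nonsing_inv,
      Ring.inverse_eq_inv', mul_comm, div_eq_mul_inv]
  have hw_det : (∑ i, w i • A i).det ≠ 0 := (posDef_sum_smul_of_posDef_sum hA hsum hw).det_pos.ne'
  have hlog_det : Real.log ‖(∑ i, w i • B i).det‖ =
      Real.log ‖(∑ i, w i • A i).det‖ - Real.log ‖(∑ i, A i).det‖ := by
    rw [hB_det, norm_div,
      Real.log_div (norm_ne_zero_iff.mpr hw_det) (norm_ne_zero_iff.mpr hsum.det_pos.ne')]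
  have hle := sum_re_trace_mul_log_le_log_norm_det
    (fun i ↦ (hA i).mul_mul_conjTranspose_same C) hB_sum hw
  simp only [← hB_trace]
  linarith

theorem logdet_sum_exp_two_rankOne_convex_general {E : Type*} [AddCommMonoid E] [Module ℝ E]
    {s : Set E} (hs : Convex ℝ s) {A : ι → Matrix n n 𝕜} (hA : ∀ i, (A i).PosSemidef)
    (hsum : (∑ i, A i).PosDef) {g : ι → E → ℝ} (hg : ∀ i, ConvexOn ℝ s (g i)) :
    ConvexOn ℝ s fun z ↦ Real.log ‖(∑ i, Real.exp (g i z) • A i).det‖ := by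
  refine ⟨hs, fun x hx y hy a b ha hb hab ↦ ?_⟩
  set z := a • x + b • y
  set F : E → ℝ := fun u ↦ Real.log ‖(∑ i, Real.exp (g i u) • A i).det‖
  let M (i : ι) : Matrix n n 𝕜 := Real.exp (g i z) • A i
  have hM (i : ι) : (M i).PosSemidef := (hA i).smul (Real.exp_pos _).le
  have hM_sum : (∑ i, M i).PosDef :=
    posDef_sum_smul_of_posDef_sum hA hsum fun i ↦ Real.exp_pos (g i z)
  let c (i : ι) : ℝ := RCLike.re ((∑ j, M j)⁻¹ * M i).trace
  have hc (i : ι) : 0 ≤ c i :=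
    (RCLike.nonneg_iff.mp (trace_mul_nonneg_of_posSemidef hM_sum.inv.posSemidef (hM i))).1
  have htangent (u : E) : F z + ∑ i, c i * (g i u - g i z) ≤ F u := by
    have hle := log_norm_det_add_sum_re_trace_mul_log_le hM hM_sum
      fun i ↦ Real.exp_pos (g i u - g i z)
    simpa only [M, smul_smul, ← Real.exp_add, sub_add_cancel, Real.log_exp] using hle
  have hslope : 0 ≤ ∑ i, c i * (a * (g i x - g i z) + b * (g i y - g i z)) := by
    refine Finset.sum_nonneg fun i _ ↦ mul_nonneg (hc i) ?_
    have hconv : g i z ≤ a * g i x + b * g i y := (hg i).2 hx hy ha hb hab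
    linear_combination hconv + g i z * hab
  calc F z ≤ F z + ∑ i, c i * (a * (g i x - g i z) + b * (g i y - g i z)) :=
        le_add_of_nonneg_right hslope
    _ = a * (F z + ∑ i, c i * (g i x - g i z)) + b * (F z + ∑ i, c i * (g i y - g i z)) := by
        simp only [mul_add, Finset.sum_add_distrib, Finset.mul_sum, mul_left_comm (c _)]
        linear_combination -F z * hab
    _ ≤ a • F x + b • F y :=
        add_le_add (mul_le_mul_of_nonneg_left (htangent x) ha)
          (mul_le_mul_of_nonneg_left (htangent y) hb)

end LogDet

/-- If the family `{p_i, q_i}_{i=1}^I` of real vectors spans `ℝ^K`, then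
`z ↦ log det(∑ i, e^{z i} (p_i p_iᵀ + q_i q_iᵀ))` is convex on `ℝ^I`. -/
theorem logdet_sum_exp_two_rankOne_convex (K I : ℕ) (hK : 0 < K) (hI : 0 < I)
    (p q : Fin I → Fin K → ℝ)
    (hspan : Submodule.span ℝ (Set.range p ∪ Set.range q) = ⊤) :
    ConvexOn ℝ Set.univ (fun z : Fin I → ℝ =>
      Real.log ((∑ i, Real.exp (z i) •
        (Matrix.vecMulVec (p i) (p i) + Matrix.vecMulVec (q i) (q i))).det)) := by
  have hspan_elim : Submodule.span ℝ (Set.range (Sum.elim p q)) = ⊤ := by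
    rwa [Set.Sum.elim_range]
  have hsum := posDef_sum_vecMulVec_star_of_span_eq_top hspan_elim
  simp only [Fintype.sum_sum_type, Sum.elim_inl, Sum.elim_inr, star_trivial,
    ← Finset.sum_add_distrib] at hsum
  simpa using logdet_sum_exp_two_rankOne_convex_general convex_univ
    (fun i ↦ (posSemidef_vecMulVec_self_star (p i)).add (posSemidef_vecMulVec_self_star (q i)))
    hsum fun i ↦ (LinearMap.proj (R := ℝ) (φ := fun _ : Fin I ↦ ℝ) i).convexOn convex_univ
end

section
/- Let H be an M-by-N complex matrix, Y an M-by-L complex matrix, z ∈ ℝ^N, and β ∈ ℝ. Let Σ = e^β I_M + H diag(e^{z}) H^*, which is Hermitian positive definite and hence invertible. Then for every N-by-L complex matrix Θ, tr(Y^* Σ^{-1} Y) ≤ e^{-β} ‖Y − H Θ‖_F^2 + tr(Θ^* diag(e^{-z}) Θ), where both sides are real numbers. -/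
open Matrix

open scoped ComplexOrder

/-!
Let `S = A + H B Hᴴ` with `A` and `B` positive definite. As a function of `Θ`, the penalized
least squares cost `(Y - H Θ)ᴴ A⁻¹ (Y - H Θ) + Θᴴ B⁻¹ Θ` is quadratic, with minimizer
`μ = B Hᴴ S⁻¹ Y` and minimum `Yᴴ S⁻¹ Y`. Completing the square at `μ` shows that the excess
over the minimum is the positive semidefinite matrix `(Θ - μ)ᴴ (B⁻¹ + Hᴴ A⁻¹ H) (Θ - μ)`,
and taking traces gives the bound.
-/

section CompletingSquare

variable {m n l R : Type*} [Fintype m] [Fintype n] [DecidableEq m] [CommRing R] [StarRing R]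

lemma conjTranspose_mul_sub_mul_inv_mul_mul_sub {A : Matrix m m R} (hA : A.IsHermitian)
    (hA' : IsUnit A) (X W : Matrix m l R) :
    (A * X - W)ᴴ * A⁻¹ * (A * X - W) = Xᴴ * A * X - Xᴴ * W - Wᴴ * X + Wᴴ * A⁻¹ * W := by
  have hdet : IsUnit A.det := (isUnit_iff_isUnit_det A).mp hA'
  have hleft : (A * X - W)ᴴ * A⁻¹ = Xᴴ - Wᴴ * A⁻¹ := by
    rw [conjTranspose_sub, conjTranspose_mul, hA.eq, Matrix.sub_mul,
      mul_nonsing_inv_cancel_right _ _ hdet]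
  have hcross : Wᴴ * A⁻¹ * (A * X) = Wᴴ * X := by
    rw [← Matrix.mul_assoc, nonsing_inv_mul_cancel_right _ _ hdet]
  rw [hleft, Matrix.sub_mul, Matrix.mul_sub, Matrix.mul_sub, hcross, ← Matrix.mul_assoc]
  abel

lemma conjTranspose_inv_mul_mul_mul_inv_mul {S : Matrix m m R} (hS : S.IsHermitian)
    (hS' : IsUnit S) (Y : Matrix m l R) :
    (S⁻¹ * Y)ᴴ * S * (S⁻¹ * Y) = Yᴴ * S⁻¹ * Y := by
  have hdet : IsUnit S.det := (isUnit_iff_isUnit_det S).mp hS'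
  rw [conjTranspose_mul, hS.inv.eq, nonsing_inv_mul_cancel_right _ _ hdet, Matrix.mul_assoc]

/-- The minimizer of `penalizedCost A B H Y`: the posterior mean of the coefficients in the Gaussian
linear model `Y = H Θ + noise` with noise covariance `A` and prior covariance `B`. -/
noncomputable def posteriorMean (A : Matrix m m R) (B : Matrix n n R) (H : Matrix m n R)
    (Y : Matrix m l R) : Matrix n l R :=
  B * (Hᴴ * ((A + H * B * Hᴴ)⁻¹ * Y))

variable {A : Matrix m m R} {B : Matrix n n R} {H : Matrix m n R}

lemma sub_mul_posteriorMean (hS : IsUnit (A + H * B * Hᴴ)) (Y : Matrix m l R) :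
    Y - H * posteriorMean A B H Y = A * ((A + H * B * Hᴴ)⁻¹ * Y) := by
  have hdet : IsUnit (A + H * B * Hᴴ).det := (isUnit_iff_isUnit_det _).mp hS
  have hY := mul_nonsing_inv_cancel_left _ Y hdet
  rw [Matrix.add_mul] at hY
  rw [sub_eq_iff_eq_add, posteriorMean, ← Matrix.mul_assoc H, ← Matrix.mul_assoc (H * B), hY]

variable [DecidableEq n]

/-- The penalized least squares cost of fitting `Y` by `H * Θ`, as a matrix with one row and
column for each column of `Y`; its trace is the majorizer. The weights `A` and `B` are covariances,
so they enter through their inverses. -/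
noncomputable def penalizedCost (A : Matrix m m R) (B : Matrix n n R) (H : Matrix m n R)
    (Y : Matrix m l R) (Θ : Matrix n l R) : Matrix l l R :=
  (Y - H * Θ)ᴴ * A⁻¹ * (Y - H * Θ) + Θᴴ * B⁻¹ * Θ

theorem penalizedCost_eq_add (hA : A.IsHermitian) (hA' : IsUnit A) (hB : B.IsHermitian)
    (hB' : IsUnit B) (hS : IsUnit (A + H * B * Hᴴ)) (Y : Matrix m l R) (Θ : Matrix n l R) :
    penalizedCost A B H Y Θ =
      Yᴴ * (A + H * B * Hᴴ)⁻¹ * Y +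
        (Θ - posteriorMean A B H Y)ᴴ * (B⁻¹ + Hᴴ * A⁻¹ * H) * (Θ - posteriorMean A B H Y) := by
  set S := A + H * B * Hᴴ with hS_def
  set μ := posteriorMean A B H Y with hμ
  set X := S⁻¹ * Y with hX
  have hresidual : Y - H * Θ = A * X - H * (Θ - μ) := by
    rw [hX, ← sub_mul_posteriorMean hS, Matrix.mul_sub]
    abel
  have hcoeff : Θ = B * (Hᴴ * X) - (μ - Θ) := by
    rw [hμ, posteriorMean]
    abel
  have hmin : Yᴴ * S⁻¹ * Y = Xᴴ * A * X + (Hᴴ * X)ᴴ * B * (Hᴴ * X) := by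
    have hS_herm : S.IsHermitian := hA.add (isHermitian_mul_mul_conjTranspose H hB)
    rw [← conjTranspose_inv_mul_mul_mul_inv_mul hS_herm hS Y, ← hX]
    simp only [hS_def, Matrix.mul_add, Matrix.add_mul, conjTranspose_mul,
      conjTranspose_conjTranspose, Matrix.mul_assoc]
  have hfit := conjTranspose_mul_sub_mul_inv_mul_mul_sub hA hA' X (H * (Θ - μ))
  have hpenalty := conjTranspose_mul_sub_mul_inv_mul_mul_sub hB hB' (Hᴴ * X) (μ - Θ)
  rw [← hresidual] at hfit
  rw [← hcoeff, ← neg_sub Θ μ] at hpenalty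
  rw [penalizedCost, hfit, hpenalty, hmin]
  simp only [conjTranspose_mul, conjTranspose_neg, conjTranspose_conjTranspose, Matrix.mul_add,
    Matrix.add_mul, Matrix.mul_neg, Matrix.neg_mul, Matrix.mul_assoc]
  abel

end CompletingSquare

section PosDef

variable {m n l K : Type*} [Fintype m] [Fintype n] [DecidableEq m] [DecidableEq n]
  [Field K] [PartialOrder K] [StarRing K] [AddLeftMono K]
  {A : Matrix m m K} {B : Matrix n n K}

theorem posSemidef_penalizedCost_sub [Finite l] (hA : A.PosDef) (hB : B.PosDef)
    (H : Matrix m n K) (Y : Matrix m l K) (Θ : Matrix n l K) :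
    (penalizedCost A B H Y Θ - Yᴴ * (A + H * B * Hᴴ)⁻¹ * Y).PosSemidef := by
  have hS : (A + H * B * Hᴴ).PosDef :=
    hA.add_posSemidef (hB.posSemidef.mul_mul_conjTranspose_same H)
  have hprecision : (B⁻¹ + Hᴴ * A⁻¹ * H).PosSemidef :=
    hB.inv.posSemidef.add (hA.inv.posSemidef.conjTranspose_mul_mul_same H)
  rw [penalizedCost_eq_add hA.isHermitian hA.isUnit hB.isHermitian hB.isUnit hS.isUnit,
    add_sub_cancel_left]
  exact hprecision.conjTranspose_mul_mul_same _

theorem trace_inv_quadratic_upper_bound_general [Fintype l] (hA : A.PosDef) (hB : B.PosDef)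
    (H : Matrix m n K) (Y : Matrix m l K) (Θ : Matrix n l K) :
    trace (Yᴴ * (A + H * B * Hᴴ)⁻¹ * Y) ≤
      trace ((Y - H * Θ)ᴴ * A⁻¹ * (Y - H * Θ)) + trace (Θᴴ * B⁻¹ * Θ) := by
  have htrace := (posSemidef_penalizedCost_sub hA hB H Y Θ).trace_nonneg
  rwa [penalizedCost, trace_sub, trace_add, sub_nonneg] at htrace

end PosDef

section Exp

variable {n : Type*} [DecidableEq n]

lemma posDef_exp_smul_one (β : ℝ) : ((Real.exp β : ℂ) • (1 : Matrix n n ℂ)).PosDef :=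
  PosDef.one.smul (Complex.zero_lt_real.mpr (Real.exp_pos β))

lemma posDef_diagonal_exp (z : n → ℝ) : (diagonal fun i => (Real.exp (z i) : ℂ)).PosDef :=
  PosDef.diagonal fun i => Complex.zero_lt_real.mpr (Real.exp_pos (z i))

variable [Fintype n]

lemma inv_diagonal_exp (z : n → ℝ) :
    (diagonal fun i => (Real.exp (z i) : ℂ))⁻¹ = diagonal fun i => (Real.exp (-z i) : ℂ) :=
  inv_eq_right_inv <| by
    simp only [diagonal_mul_diagonal, ← Complex.ofReal_mul, ← Real.exp_add, add_neg_cancel,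
      Real.exp_zero, Complex.ofReal_one, diagonal_one]

lemma inv_exp_smul_one (β : ℝ) :
    ((Real.exp β : ℂ) • (1 : Matrix n n ℂ))⁻¹ = (Real.exp (-β) : ℂ) • 1 := by
  simpa only [smul_one_eq_diagonal] using inv_diagonal_exp fun _ : n => β

end Exp

/-- **Majorization inequality (4).** With `Σ = e^β I + H diag(e^z) Hᴴ`, for every
`Θ` one has `tr(Yᴴ Σ⁻¹ Y) ≤ e^{-β} ‖Y − HΘ‖_F² + tr(Θᴴ diag(e^{-z}) Θ)`.
Both traces and the squared Frobenius norm (written as `tr((Y−HΘ)ᴴ(Y−HΘ))`) are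
real, recovered via real parts. -/
theorem trace_inv_quadratic_upper_bound (M N L : ℕ)
    (H : Matrix (Fin M) (Fin N) ℂ) (Y : Matrix (Fin M) (Fin L) ℂ)
    (z : Fin N → ℝ) (β : ℝ) (Θ : Matrix (Fin N) (Fin L) ℂ) :
    (Matrix.trace (Yᴴ *
        ((Real.exp β : ℂ) • (1 : Matrix (Fin M) (Fin M) ℂ) +
          H * Matrix.diagonal (fun n => (Real.exp (z n) : ℂ)) * Hᴴ)⁻¹ * Y)).re ≤
      Real.exp (-β) * (Matrix.trace ((Y - H * Θ)ᴴ * (Y - H * Θ))).re +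
        (Matrix.trace (Θᴴ * Matrix.diagonal (fun n => (Real.exp (-(z n)) : ℂ)) * Θ)).re := by
  simpa only [inv_exp_smul_one, inv_diagonal_exp, Matrix.mul_smul, Matrix.smul_mul,
    Matrix.mul_one, trace_smul, smul_eq_mul, Complex.add_re, Complex.re_ofReal_mul] using
    Complex.re_le_re (trace_inv_quadratic_upper_bound_general (posDef_exp_smul_one β)
      (posDef_diagonal_exp z) H Y Θ)
end
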